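/- Let ℓ ≥ 2 be even and X = R_{k×k,ℓ}, with minimal-weight subspace X^{(ℓ)} = span{u(0,ℓ-1) : u ∈ A} and product u ∘ v = u⁽ˡ⁻¹⁾v ((ℓ-1)-th product) on X^{(ℓ)}. Then for all u, v ∈ A one has u(0,ℓ-1) ∘ v(0,ℓ-1) = -(uv+vu)(0,ℓ-1); consequently the linear map u ↦ -u(0,ℓ-1) is an isomorphism from the Jordan algebra M_k(F)⁺ (the space A with product u∗v = uv+vu) onto (X^{(ℓ)}, ∘), so (X^{(ℓ)}, ∘) is a simple Jordan algebra of type A, independent of ℓ. -/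

import Mathlib

/-- The carrier of `R_{k×k} = M_k(F) ⊗ F[t₁,t₂]`: the element `u(m,n) = u ⊗ t₁^m t₂^n`
is encoded as `Finsupp.single (m, n) u`. -/
abbrev MatCarrier (F : Type*) [Field F] (k : ℕ) :=
  (ℕ × ℕ) →₀ Matrix (Fin k) (Fin k) F

/-- The operator `∂` on `R_{k×k}`:
`∂(u(m,n)) = (m+1)·u(m+1,n) + (n+1)·u(m,n+1)`. -/
noncomputable def mD (F : Type*) [Field F] (k : ℕ) :
    MatCarrier F k → MatCarrier F k :=
  fun f => f.sum fun p u =>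
    (((p.1 + 1 : ℕ) : F)) • Finsupp.single (p.1 + 1, p.2) u +
    (((p.2 + 1 : ℕ) : F)) • Finsupp.single (p.1, p.2 + 1) u

/-- The `s`-th product on `R_{k×k}`: the coefficient of `z^{-s-1}` in
`Y⁺(u(m₁,m₂),z)(v(n₁,n₂)) =
  binom(-n₁-1,m₂)·Σ_p binom(p,m₁)·(uv)(p,n₂)·z^{p-m₁-m₂-n₁-1}
  - binom(-n₂-1,m₁)·Σ_q binom(q,m₂)·(vu)(n₁,q)·z^{q-m₁-m₂-n₂-1}`,
extended bilinearly, where `binom(-a-1,b) = (-1)^b·binom(a+b,b)`. -/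
noncomputable def mProd (F : Type*) [Field F] (k : ℕ) (s : ℕ)
    (f g : MatCarrier F k) : MatCarrier F k :=
  f.sum fun p u => g.sum fun q v =>
    (if s ≤ p.1 + p.2 + q.1 then
      ((-1 : F) ^ p.2 * ((q.1 + p.2).choose p.2 : F) *
        ((p.1 + p.2 + q.1 - s).choose p.1 : F)) •
        Finsupp.single (p.1 + p.2 + q.1 - s, q.2) (u * v)
     else 0) -
    (if s ≤ p.1 + p.2 + q.2 then
      ((-1 : F) ^ p.1 * ((q.2 + p.1).choose p.1 : F) *
        ((p.1 + p.2 + q.2 - s).choose p.2 : F)) •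
        Finsupp.single (q.1, p.1 + p.2 + q.2 - s) (v * u)
     else 0)

/-- The weight space `R_{k×k}^{(n)} = span{u(m₁,m₂) : m₁ + m₂ + 1 = n}`. -/
noncomputable def mWeight (F : Type*) [Field F] (k : ℕ) (n : ℕ) :
    Submodule F (MatCarrier F k) :=
  Submodule.span F {x | ∃ (u : Matrix (Fin k) (Fin k) F) (m₁ m₂ : ℕ),
    m₁ + m₂ + 1 = n ∧ x = Finsupp.single (m₁, m₂) u}

/-!
For odd `L`, the `L`-th product of `u(0, L)` and `v(0, L)` is `-(uv + vu)(0, L)`, so the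
minimal-weight subspace is a copy of `M_k(F)⁺`. Its simplicity is Herstein's theorem: in a ring
`R`, a Jordan ideal `J` contains `2R(ab + ba)R` for all `a, b ∈ J`, since `[x, ab + ba]` and
`x(ab + ba) + (ab + ba)x` both lie in `J`. If `R` is simple and `2` is invertible, then either `J`
is everything, or all `ab + ba` vanish on `J`; in the latter case `bxb = 0` for all `b ∈ J` and
`x ∈ R`, which forces `b = 0`.
-/

section SimpleRing

variable {R : Type*} [Ring R] [IsSimpleRing R]

theorem addSubgroup_eq_top_of_mul_mul_mem {J : AddSubgroup R} {c : R} (hc : c ≠ 0)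
    (hJ : ∀ x y, x * c * y ∈ J) : J = ⊤ := by
  let I : TwoSidedIdeal R := TwoSidedIdeal.mk' {r | ∀ x y, x * r * y ∈ J}
    (fun x y => by simp only [mul_zero, zero_mul, J.zero_mem])
    (fun hr hs x y => by simpa only [mul_add, add_mul] using J.add_mem (hr x y) (hs x y))
    (fun hr x y => by simpa only [mul_neg, neg_mul] using J.neg_mem (hr x y))
    (fun {r _} hs x y => by simpa only [mul_assoc] using hs (x * r) y)
    (fun {_ s} hr x y => by simpa only [mul_assoc] using hr x (s * y))
  have mem_I {r : R} : r ∈ I ↔ ∀ x y, x * r * y ∈ J := TwoSidedIdeal.mem_mk' ..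
  have one_mem : (1 : R) ∈ I := IsSimpleRing.one_mem_of_ne_zero_mem I hc (mem_I.2 hJ)
  exact (AddSubgroup.eq_top_iff' J).2 fun r => by simpa using mem_I.1 one_mem r 1

theorem eq_zero_of_forall_mul_mul_self_eq_zero {b : R} (hb : ∀ x, b * x * b = 0) : b = 0 := by
  by_contra hb0
  have annihilator_eq_top : (AddMonoidHom.mulLeft b).ker = ⊤ :=
    addSubgroup_eq_top_of_mul_mul_mem hb0 fun x y => by
      simp [AddMonoidHom.mem_ker, ← mul_assoc, hb]
  have one_mem : (1 : R) ∈ (AddMonoidHom.mulLeft b).ker :=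
    annihilator_eq_top ▸ AddSubgroup.mem_top 1
  exact hb0 (by simpa [AddMonoidHom.mem_ker] using one_mem)

end SimpleRing

/-- The product of the Jordan algebra `R⁺`, without the factor `1/2` used for `SymAlg`. -/
def jordanMul {R : Type*} [Ring R] (a b : R) : R := a * b + b * a

local infixl:70 " ∗ " => jordanMul

/-- Ideals of the Jordan ring `R⁺`, as additive subgroups of `R`; by commutativity of `∗`
absorption on one side suffices. -/
def IsJordanIdeal {R : Type*} [Ring R] (J : AddSubgroup R) : Prop :=
  ∀ a, ∀ b ∈ J, a ∗ b ∈ J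

section JordanMul

variable {R : Type*} [Ring R]

theorem jordanMul_comm (a b : R) : a ∗ b = b ∗ a := add_comm _ _

theorem jordanMul_jordan_identity (a b : R) : ((a ∗ a) ∗ b) ∗ a = (a ∗ a) ∗ (b ∗ a) := by
  simp only [jordanMul]
  noncomm_ring

theorem jordanMul_self (a : R) : a ∗ a = 2 * (a * a) := (two_mul _).symm

theorem commutator_jordanMul (x a b : R) :
    x * (a ∗ b) - (a ∗ b) * x = a ∗ (x * b - b * x) - (a * x - x * a) ∗ b := by
  simp only [jordanMul]
  noncomm_ring

end JordanMul

namespace IsJordanIdeal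

variable {R : Type*} [Ring R] {J : AddSubgroup R}

theorem jordanMul_mem_right (hJ : IsJordanIdeal J) {a : R} (ha : a ∈ J) (x : R) : a ∗ x ∈ J :=
  jordanMul_comm x a ▸ hJ x a ha

theorem mul_jordanMul_mem (hJ : IsJordanIdeal J) (h2 : IsUnit (2 : R)) {a b : R} (ha : a ∈ J)
    (hb : b ∈ J) (x : R) : x * (a ∗ b) ∈ J := by
  have two_mul_mem (y : R) : 2 * (y * (a ∗ b)) ∈ J := by
    have commutator_mem : y * (a ∗ b) - (a ∗ b) * y ∈ J := by
      rw [commutator_jordanMul]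
      exact J.sub_mem (hJ.jordanMul_mem_right ha _) (hJ _ b hb)
    have anticommutator_mem : y ∗ (a ∗ b) ∈ J := hJ y _ (hJ a b hb)
    convert J.add_mem commutator_mem anticommutator_mem using 1
    simp only [jordanMul]
    noncomm_ring
  obtain ⟨y, rfl⟩ : ∃ y, 2 * y = x := h2.dvd.imp fun _ => Eq.symm
  simpa only [mul_assoc] using two_mul_mem y

theorem mul_jordanMul_mul_mem (hJ : IsJordanIdeal J) (h2 : IsUnit (2 : R)) {a b : R} (ha : a ∈ J)
    (hb : b ∈ J) (x y : R) : x * (a ∗ b) * y ∈ J := by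
  have hxc := hJ.mul_jordanMul_mem h2 ha hb
  have := J.sub_mem (hJ y _ (hxc x)) (hxc (y * x))
  rwa [jordanMul, mul_assoc y, add_sub_cancel_left] at this

theorem mul_mul_self_eq_zero (hJ : IsJordanIdeal J) (h2 : IsUnit (2 : R))
    (h : ∀ a ∈ J, ∀ b ∈ J, a ∗ b = 0) {b : R} (hb : b ∈ J) (x : R) : b * x * b = 0 := by
  have sq_eq_zero : b * b = 0 := by
    rw [← h2.mul_right_eq_zero, ← jordanMul_self, h b hb b hb]
  have expansion : b ∗ (x ∗ b) = 2 * (b * x * b) + (b * b * x + x * (b * b)) := by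
    simp only [jordanMul]
    noncomm_ring
  rw [h b hb _ (hJ x b hb), sq_eq_zero, zero_mul, mul_zero, add_zero, add_zero] at expansion
  exact h2.mul_right_eq_zero.1 expansion.symm

theorem eq_bot_or_eq_top [IsSimpleRing R] (hJ : IsJordanIdeal J) (h2 : IsUnit (2 : R)) :
    J = ⊥ ∨ J = ⊤ := by
  by_cases h : ∀ a ∈ J, ∀ b ∈ J, a ∗ b = 0
  · exact .inl <| (AddSubgroup.eq_bot_iff_forall J).2 fun b hb =>
      eq_zero_of_forall_mul_mul_self_eq_zero (hJ.mul_mul_self_eq_zero h2 h hb)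
  · push Not at h
    obtain ⟨a, ha, b, hb, hab⟩ := h
    exact .inr <| addSubgroup_eq_top_of_mul_mul_mem hab (hJ.mul_jordanMul_mul_mem h2 ha hb)

end IsJordanIdeal

theorem submodule_eq_bot_or_eq_range_of_map_jordanMul {K R M : Type*} [Ring K] [Ring R]
    [IsSimpleRing R] [Module K R] [AddCommGroup M] [Module K M] (h2 : IsUnit (2 : R))
    (φ : R →ₗ[K] M) {μ : M → M → M} (hμ : ∀ a b, μ (φ a) (φ b) = φ (a ∗ b)) {I : Submodule K M}
    (hI : I ≤ LinearMap.range φ) (hμI : ∀ a, ∀ y ∈ I, μ (φ a) y ∈ I) :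
    I = ⊥ ∨ I = LinearMap.range φ := by
  have comap_isJordanIdeal : IsJordanIdeal (I.comap φ).toAddSubgroup := fun a b hb => by
    simpa [hμ] using hμI a (φ b) hb
  rw [← Submodule.map_comap_eq_of_le hI]
  rcases comap_isJordanIdeal.eq_bot_or_eq_top h2 with h | h
  · left
    rw [(Submodule.toAddSubgroup_injective h : I.comap φ = ⊥), Submodule.map_bot]
  · right
    rw [(Submodule.toAddSubgroup_injective h : I.comap φ = ⊤), Submodule.map_top]

theorem isUnit_two_of_algebra (F A : Type*) [Field F] [NeZero (2 : F)] [Semiring A] [Algebra F A] :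
    IsUnit (2 : A) := by
  rw [← map_ofNat (algebraMap F A) 2]
  exact (IsUnit.mk0 (2 : F) two_ne_zero).map (algebraMap F A)

section MinimalWeight

variable (F : Type*) [Field F] (k : ℕ)

theorem mProd_single_single (s : ℕ) (p q : ℕ × ℕ) (u v : Matrix (Fin k) (Fin k) F) :
    mProd F k s (Finsupp.single p u) (Finsupp.single q v) =
      (if s ≤ p.1 + p.2 + q.1 then
        ((-1 : F) ^ p.2 * ((q.1 + p.2).choose p.2 : F) *
          ((p.1 + p.2 + q.1 - s).choose p.1 : F)) •
          Finsupp.single (p.1 + p.2 + q.1 - s, q.2) (u * v)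
       else 0) -
      (if s ≤ p.1 + p.2 + q.2 then
        ((-1 : F) ^ p.1 * ((q.2 + p.1).choose p.1 : F) *
          ((p.1 + p.2 + q.2 - s).choose p.2 : F)) •
          Finsupp.single (q.1, p.1 + p.2 + q.2 - s) (v * u)
       else 0) := by
  rw [mProd, Finsupp.sum_single_index (by simp), Finsupp.sum_single_index (by simp)]

theorem mProd_single_zero (L : ℕ) (u v : Matrix (Fin k) (Fin k) F) :
    mProd F k L (Finsupp.single (0, L) u) (Finsupp.single (0, L) v) =
      Finsupp.single (0, L) ((-1 : F) ^ L • (u * v) - v * u) := by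
  simp [mProd_single_single, Finsupp.single_sub, -Finsupp.single_mul]

variable {L : ℕ}

theorem mProd_single_zero_of_odd (hL : Odd L) (u v : Matrix (Fin k) (Fin k) F) :
    mProd F k L (Finsupp.single (0, L) u) (Finsupp.single (0, L) v) =
      -Finsupp.single (0, L) (u * v + v * u) := by
  rw [mProd_single_zero, hL.neg_one_pow, ← Finsupp.single_neg, neg_one_smul, neg_add']

variable (L) in
/-- The map `u ↦ -u(0, L)` identifying `M_k(F)⁺` with the minimal-weight subspace of
`R_{k×k,L+1}`. -/
noncomputable def minimalWeightMap : Matrix (Fin k) (Fin k) F →ₗ[F] MatCarrier F k :=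
  -Finsupp.lsingle (0, L)

theorem minimalWeightMap_injective : Function.Injective (minimalWeightMap F k L) :=
  neg_injective.comp (Finsupp.single_injective _)

theorem range_minimalWeightMap :
    Set.range (minimalWeightMap F k L) = {x | ∃ u, x = Finsupp.single (0, L) u} := by
  ext x
  constructor
  · rintro ⟨u, rfl⟩
    exact ⟨-u, (Finsupp.single_neg _ _).symm⟩
  · rintro ⟨u, rfl⟩
    exact ⟨-u, by simp [minimalWeightMap]⟩

theorem span_minimalWeight_eq_range :
    Submodule.span F {x : MatCarrier F k | ∃ u, x = Finsupp.single (0, L) u} =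
      LinearMap.range (minimalWeightMap F k L) := by
  rw [← range_minimalWeightMap, ← LinearMap.coe_range, Submodule.span_eq]

theorem mProd_minimalWeightMap (hL : Odd L) (u v : Matrix (Fin k) (Fin k) F) :
    mProd F k L (minimalWeightMap F k L u) (minimalWeightMap F k L v) =
      minimalWeightMap F k L (u ∗ v) := by
  have map_eq_single_neg (w : Matrix (Fin k) (Fin k) F) :
      minimalWeightMap F k L w = Finsupp.single (0, L) (-w) := (Finsupp.single_neg _ _).symm
  rw [map_eq_single_neg u, map_eq_single_neg v, mProd_single_zero_of_odd F k hL,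
    neg_mul_neg, neg_mul_neg]
  rfl

end MinimalWeight

theorem Rkkl_minimal_weight_jordan_typeA_general (F : Type*) [Field F] [NeZero (2 : F)]
    (k ℓ : ℕ) (hk : 1 ≤ k) (hℓ : 2 ≤ ℓ) (heven : Even ℓ) :
    (∀ u v : Matrix (Fin k) (Fin k) F,
      mProd F k (ℓ - 1) (Finsupp.single ((0 : ℕ), ℓ - 1) u)
          (Finsupp.single ((0 : ℕ), ℓ - 1) v)
        = -(Finsupp.single ((0 : ℕ), ℓ - 1) (u * v + v * u))) ∧
    (Function.Injective fun u : Matrix (Fin k) (Fin k) F =>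
      -(Finsupp.single ((0 : ℕ), ℓ - 1) u : MatCarrier F k)) ∧
    (Set.range (fun u : Matrix (Fin k) (Fin k) F =>
        -(Finsupp.single ((0 : ℕ), ℓ - 1) u : MatCarrier F k))
      = {x : MatCarrier F k | ∃ u, x = Finsupp.single ((0 : ℕ), ℓ - 1) u}) ∧
    (∀ u v : Matrix (Fin k) (Fin k) F,
      -(Finsupp.single ((0 : ℕ), ℓ - 1) (u * v + v * u) : MatCarrier F k)
        = mProd F k (ℓ - 1) (-(Finsupp.single ((0 : ℕ), ℓ - 1) u))
            (-(Finsupp.single ((0 : ℕ), ℓ - 1) v))) ∧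
    (∀ x ∈ {x : MatCarrier F k | ∃ u, x = Finsupp.single ((0 : ℕ), ℓ - 1) u},
     ∀ y ∈ {x : MatCarrier F k | ∃ u, x = Finsupp.single ((0 : ℕ), ℓ - 1) u},
      mProd F k (ℓ - 1) x y
        ∈ {x : MatCarrier F k | ∃ u, x = Finsupp.single ((0 : ℕ), ℓ - 1) u} ∧
      mProd F k (ℓ - 1) x y = mProd F k (ℓ - 1) y x ∧
      mProd F k (ℓ - 1) (mProd F k (ℓ - 1) (mProd F k (ℓ - 1) x x) y) x
        = mProd F k (ℓ - 1) (mProd F k (ℓ - 1) x x) (mProd F k (ℓ - 1) y x)) ∧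
    (∃ x ∈ {x : MatCarrier F k | ∃ u, x = Finsupp.single ((0 : ℕ), ℓ - 1) u},
     ∃ y ∈ {x : MatCarrier F k | ∃ u, x = Finsupp.single ((0 : ℕ), ℓ - 1) u},
      mProd F k (ℓ - 1) x y ≠ 0) ∧
    (∀ I : Submodule F (MatCarrier F k),
      I ≤ Submodule.span F
        {x : MatCarrier F k | ∃ u, x = Finsupp.single ((0 : ℕ), ℓ - 1) u} →
      (∀ a ∈ {x : MatCarrier F k | ∃ u, x = Finsupp.single ((0 : ℕ), ℓ - 1) u},
        ∀ b ∈ I, mProd F k (ℓ - 1) a b ∈ I) →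
      I = ⊥ ∨ I = Submodule.span F
        {x : MatCarrier F k | ∃ u, x = Finsupp.single ((0 : ℕ), ℓ - 1) u}) := by
  have : Nonempty (Fin k) := ⟨⟨0, hk⟩⟩
  have hL : Odd (ℓ - 1) := Nat.Even.sub_odd (by omega) heven odd_one
  have h2 : IsUnit (2 : Matrix (Fin k) (Fin k) F) := isUnit_two_of_algebra F _
  have hmul := mProd_minimalWeightMap F k hL
  refine ⟨mProd_single_zero_of_odd F k hL, minimalWeightMap_injective F k,
    range_minimalWeightMap F k, fun u v => (hmul u v).symm, ?_⟩
  rw [span_minimalWeight_eq_range, ← range_minimalWeightMap]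
  refine ⟨?_, ⟨_, ⟨1, rfl⟩, _, ⟨1, rfl⟩, ?_⟩, fun I hI hideal => ?_⟩
  · rintro _ ⟨u, rfl⟩ _ ⟨v, rfl⟩
    refine ⟨⟨_, (hmul u v).symm⟩, ?_, ?_⟩
    · rw [hmul, hmul, jordanMul_comm]
    · simp only [hmul, jordanMul_jordan_identity]
  · rw [hmul, jordanMul_self, mul_one, mul_one,
      map_ne_zero_iff _ (minimalWeightMap_injective F k)]
    exact h2.ne_zero
  · exact submodule_eq_bot_or_eq_range_of_map_jordanMul h2 _ hmul hI fun a =>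
      hideal _ ⟨a, rfl⟩

/-- **Theorem 4.3, type A**: let `ℓ ≥ 2` be even and `X = R_{k×k,ℓ}`, with
minimal-weight subspace `X^{(ℓ)} = span{u(0,ℓ-1) : u ∈ A} = {u(0,ℓ-1) : u ∈ A}` and
product `x ∘ y = x⁽ˡ⁻¹⁾y`.  Then `u(0,ℓ-1) ∘ v(0,ℓ-1) = -(uv+vu)(0,ℓ-1)`, the map
`u ↦ -u(0,ℓ-1)` is an isomorphism from the Jordan algebra `M_k(F)⁺` onto
`(X^{(ℓ)}, ∘)`, and `(X^{(ℓ)}, ∘)` is a simple Jordan algebra (of type A,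
independent of `ℓ`). -/
theorem Rkkl_minimal_weight_jordan_typeA (F : Type*) [Field F] [CharZero F]
    (k ℓ : ℕ) (hk : 1 ≤ k) (hℓ : 2 ≤ ℓ) (heven : Even ℓ) :
    -- the product formula on the minimal-weight subspace
    (∀ u v : Matrix (Fin k) (Fin k) F,
      mProd F k (ℓ - 1) (Finsupp.single ((0 : ℕ), ℓ - 1) u)
          (Finsupp.single ((0 : ℕ), ℓ - 1) v)
        = -(Finsupp.single ((0 : ℕ), ℓ - 1) (u * v + v * u))) ∧
    -- u ↦ -u(0,ℓ-1) is an isomorphism from M_k(F)⁺ onto (X^{(ℓ)}, ∘)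
    (Function.Injective fun u : Matrix (Fin k) (Fin k) F =>
      -(Finsupp.single ((0 : ℕ), ℓ - 1) u : MatCarrier F k)) ∧
    (Set.range (fun u : Matrix (Fin k) (Fin k) F =>
        -(Finsupp.single ((0 : ℕ), ℓ - 1) u : MatCarrier F k))
      = {x : MatCarrier F k | ∃ u, x = Finsupp.single ((0 : ℕ), ℓ - 1) u}) ∧
    (∀ u v : Matrix (Fin k) (Fin k) F,
      -(Finsupp.single ((0 : ℕ), ℓ - 1) (u * v + v * u) : MatCarrier F k)
        = mProd F k (ℓ - 1) (-(Finsupp.single ((0 : ℕ), ℓ - 1) u))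
            (-(Finsupp.single ((0 : ℕ), ℓ - 1) v))) ∧
    -- (X^{(ℓ)}, ∘) is a simple Jordan algebra
    (∀ x ∈ {x : MatCarrier F k | ∃ u, x = Finsupp.single ((0 : ℕ), ℓ - 1) u},
     ∀ y ∈ {x : MatCarrier F k | ∃ u, x = Finsupp.single ((0 : ℕ), ℓ - 1) u},
      mProd F k (ℓ - 1) x y
        ∈ {x : MatCarrier F k | ∃ u, x = Finsupp.single ((0 : ℕ), ℓ - 1) u} ∧
      mProd F k (ℓ - 1) x y = mProd F k (ℓ - 1) y x ∧
      mProd F k (ℓ - 1) (mProd F k (ℓ - 1) (mProd F k (ℓ - 1) x x) y) x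
        = mProd F k (ℓ - 1) (mProd F k (ℓ - 1) x x) (mProd F k (ℓ - 1) y x)) ∧
    (∃ x ∈ {x : MatCarrier F k | ∃ u, x = Finsupp.single ((0 : ℕ), ℓ - 1) u},
     ∃ y ∈ {x : MatCarrier F k | ∃ u, x = Finsupp.single ((0 : ℕ), ℓ - 1) u},
      mProd F k (ℓ - 1) x y ≠ 0) ∧
    (∀ I : Submodule F (MatCarrier F k),
      I ≤ Submodule.span F
        {x : MatCarrier F k | ∃ u, x = Finsupp.single ((0 : ℕ), ℓ - 1) u} →
      (∀ a ∈ {x : MatCarrier F k | ∃ u, x = Finsupp.single ((0 : ℕ), ℓ - 1) u},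
        ∀ b ∈ I, mProd F k (ℓ - 1) a b ∈ I) →
      I = ⊥ ∨ I = Submodule.span F
        {x : MatCarrier F k | ∃ u, x = Finsupp.single ((0 : ℕ), ℓ - 1) u}) :=
  Rkkl_minimal_weight_jordan_typeA_general F k ℓ hk hℓ heven
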